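/- arXiv:1405.3593 — 6 statements merged into one kernel-verified Lean document; each statement's English description precedes it below -/
import Mathlib

section
/- Let X and Y be locally compact Hausdorff topological spaces and let f : X → Y be a continuous map. Let p ∈ X be a point such that the fiber f⁻¹({f(p)}) is compact. Then there exist an open neighborhood U of f⁻¹({f(p)}) in X and an open neighborhood U₁ of f(p) in Y such that f maps U into U₁ and the restricted map f : U → U₁ is proper (i.e. the preimage under this restriction of every compact subset of U₁ is compact). -/
/-!
Choose a relatively compact open neighborhood `V` of the fiber. The image of its (compact) frontier
is closed and misses `f p`, so `U₁ = (f '' frontier V)ᶜ` is an open neighborhood of `f p`.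
With `U = V ∩ f ⁻¹' U₁`, the preimage in `U` of a compact `K ⊆ U₁` is the closed
subset `closure V ∩ f ⁻¹' K` of the compact set `closure V`, as no point of `frontier V` maps
into `K`.
-/

/-- Let `X` and `Y` be locally compact Hausdorff spaces and `f : X → Y` continuous.
If the fiber `f ⁻¹' {f p}` over `f p` is compact, then there are open neighborhoods
`U` of the fiber and `U₁` of `f p` such that `f` maps `U` into `U₁` and the
restricted map `U → U₁` is proper. -/
theorem local_properness_near_compact_fiber
    {X Y : Type*} [TopologicalSpace X] [TopologicalSpace Y]
    [LocallyCompactSpace X] [LocallyCompactSpace Y] [T2Space X] [T2Space Y]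
    (f : X → Y) (hf : Continuous f) (p : X)
    (hfiber : IsCompact (f ⁻¹' {f p})) :
    ∃ (U : Set X) (U₁ : Set Y), IsOpen U ∧ IsOpen U₁ ∧
      f ⁻¹' {f p} ⊆ U ∧ f p ∈ U₁ ∧
      ∃ (hmaps : Set.MapsTo f U U₁), IsProperMap (Set.MapsTo.restrict f U U₁ hmaps) := by
  obtain ⟨V, hV, hpV, hVc⟩ := exists_isOpen_superset_and_isCompact_closure hfiber
  have hfr : IsCompact (frontier V) :=
    hVc.of_isClosed_subset isClosed_frontier frontier_subset_closure
  have hU₁ : IsOpen (f '' frontier V)ᶜ := (hfr.image hf).isClosed.isOpen_compl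
  have hp : f ⁻¹' {f p} ⊆ f ⁻¹' (f '' frontier V)ᶜ := by
    rintro x hx ⟨y, hy, hyx⟩
    have hyV : y ∈ V := hpV (hyx.trans hx)
    rw [hV.frontier_eq] at hy
    exact hy.2 hyV
  refine ⟨V ∩ f ⁻¹' (f '' frontier V)ᶜ, (f '' frontier V)ᶜ, hV.inter (hU₁.preimage hf), hU₁,
    Set.subset_inter hpV hp, hp (Set.mem_singleton (f p)), fun x hx => hx.2, ?_⟩
  have : LocallyCompactSpace ((f '' frontier V)ᶜ : Set Y) := hU₁.locallyCompactSpace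
  refine isProperMap_iff_isCompact_preimage.2 ⟨hf.restrict _, fun K hK => ?_⟩
  rw [Subtype.isCompact_iff]
  have hK' : IsCompact (Subtype.val '' K) := hK.image continuous_subtype_val
  convert hVc.inter_right (hK'.isClosed.preimage hf) using 1
  ext x
  constructor
  · rintro ⟨y, hy, rfl⟩
    exact ⟨subset_closure y.2.1, _, hy, rfl⟩
  · rintro ⟨hx, k, hk, hkx⟩
    have hxU : f x ∈ (f '' frontier V)ᶜ := hkx ▸ k.2
    have hxV : x ∈ V := by
      by_contra h
      exact hxU ⟨x, hV.frontier_eq ▸ ⟨hx, h⟩, rfl⟩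
    refine ⟨⟨x, hxV, hxU⟩, ?_, rfl⟩
    have hkeq : k = ⟨f x, hxU⟩ := Subtype.ext hkx
    rw [hkeq] at hk
    exact hk
end

section
/- Let A be a real symmetric n×n matrix (n ≥ 1) whose off-diagonal entries are nonnegative (A i j ≥ 0 for all i ≠ j) and which is irreducible, and let Q(x) = xᵀAx be the associated quadratic form. If Q is negative semidefinite (Q(x) ≤ 0 for all x ∈ ℝⁿ) but not negative definite (there exists x ≠ 0 with Q(x) = 0), then the kernel of A is one-dimensional and is spanned by a vector all of whose coordinates are strictly positive. -/
open Matrix Finset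

/-!
A semidefinite form vanishes at `x` only if `A x = 0` (`mulVec_eq_zero_of_form_eq_zero`).
Since the off-diagonal entries are nonnegative, `Q(x) ≤ Q(|x|)`, so together with `Q ≤ 0` the null
vectors of `Q` are stable under coordinatewise absolute value. A nonnegative nonzero kernel vector
has no zero coordinate, by irreducibility applied to its zero set. Hence every nonzero null vector
of `Q` has only nonzero coordinates (`abs_mem_kernel_pos`): its absolute value is the positive
kernel vector `v`, and any other kernel vector becomes zero after subtracting the multiple of `v`
that cancels one of its coordinates.
-/

lemma form_eq_dotProduct {n : ℕ} (A : Matrix (Fin n) (Fin n) ℝ) (x : Fin n → ℝ) :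
    (∑ i, ∑ j, A i j * x i * x j) = x ⬝ᵥ (A *ᵥ x) := by
  simp only [dotProduct, mulVec, Finset.mul_sum]
  refine Finset.sum_congr rfl fun i _ => Finset.sum_congr rfl fun j _ => ?_
  ring

lemma mulVec_eq_zero_of_form_eq_zero {n : ℕ} {A : Matrix (Fin n) (Fin n) ℝ}
    (hsymm : A.IsSymm)
    (hsemidef : ∀ x : Fin n → ℝ, (∑ i, ∑ j, A i j * x i * x j) ≤ 0)
    {x : Fin n → ℝ} (hx : (∑ i, ∑ j, A i j * x i * x j) = 0) : A *ᵥ x = 0 := by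
  have hpos : (-A).PosSemidef := by
    refine PosSemidef.of_dotProduct_mulVec_nonneg ?_ fun y => ?_
    · rw [IsHermitian, conjTranspose_eq_transpose_of_trivial, transpose_neg, hsymm.eq]
    · have := hsemidef y
      rw [form_eq_dotProduct] at this
      simpa [neg_mulVec] using this
  rw [form_eq_dotProduct] at hx
  have := (hpos.dotProduct_mulVec_zero_iff x).1 (by simp [neg_mulVec, hx])
  simpa [neg_mulVec] using this

/-- A nonnegative nonzero kernel vector is strictly positive: at a zero coordinate `i` the `i`-th
row of `A x = 0` is a sum of nonnegative terms, which forces `A i j = 0` for all `j` in the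
support of `x`. -/
lemma pos_of_nonneg_of_mulVec_eq_zero {n : ℕ} {A : Matrix (Fin n) (Fin n) ℝ}
    (hoffdiag : ∀ i j : Fin n, i ≠ j → 0 ≤ A i j)
    (hirr : ∀ S : Finset (Fin n), S.Nonempty → S ≠ Finset.univ →
      ∃ i ∈ S, ∃ j ∉ S, A i j ≠ 0)
    {x : Fin n → ℝ} (hx0 : x ≠ 0) (hx : ∀ i, 0 ≤ x i) (hAx : A *ᵥ x = 0) (i : Fin n) :
    0 < x i := by
  by_contra hi
  obtain ⟨k, hk, j, hj, hkj⟩ := hirr (Finset.univ.filter fun i => x i = 0)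
    ⟨i, by simpa using le_antisymm (not_lt.1 hi) (hx i)⟩
    (fun h => hx0 (funext fun l => Finset.filter_eq_self.1 h l (Finset.mem_univ l)))
  simp only [Finset.mem_filter, Finset.mem_univ, true_and] at hk hj
  have hrow : ∑ l, A k l * x l = 0 := congrFun hAx k
  have hterms : ∀ l ∈ Finset.univ, 0 ≤ A k l * x l := fun l _ => by
    rcases eq_or_ne k l with rfl | hl
    · simp [hk]
    · exact mul_nonneg (hoffdiag k l hl) (hx l)
  exact mul_ne_zero hkj hj ((Finset.sum_eq_zero_iff_of_nonneg hterms).1 hrow j (Finset.mem_univ j))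

lemma abs_mem_kernel_pos {n : ℕ} {A : Matrix (Fin n) (Fin n) ℝ}
    (hsymm : A.IsSymm)
    (hoffdiag : ∀ i j : Fin n, i ≠ j → 0 ≤ A i j)
    (hirr : ∀ S : Finset (Fin n), S.Nonempty → S ≠ Finset.univ →
      ∃ i ∈ S, ∃ j ∉ S, A i j ≠ 0)
    (hsemidef : ∀ x : Fin n → ℝ, (∑ i, ∑ j, A i j * x i * x j) ≤ 0)
    {x : Fin n → ℝ} (hx0 : x ≠ 0) (hx : (∑ i, ∑ j, A i j * x i * x j) = 0) :
    A *ᵥ (fun i => |x i|) = 0 ∧ ∀ i, 0 < |x i| := by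
  have hle : (∑ i, ∑ j, A i j * x i * x j) ≤ ∑ i, ∑ j, A i j * |x i| * |x j| := by
    refine Finset.sum_le_sum fun i _ => Finset.sum_le_sum fun j _ => ?_
    rw [mul_assoc, mul_assoc, ← abs_mul]
    rcases eq_or_ne i j with rfl | hij
    · rw [abs_mul_self]
    · exact mul_le_mul_of_nonneg_left (le_abs_self _) (hoffdiag i j hij)
  have hker : A *ᵥ (fun i => |x i|) = 0 :=
    mulVec_eq_zero_of_form_eq_zero hsymm hsemidef
      (le_antisymm (hsemidef fun i => |x i|) (hx ▸ hle))
  have hne : (fun i => |x i|) ≠ 0 := fun h =>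
    hx0 (funext fun i => abs_eq_zero.1 (congrFun h i))
  exact ⟨hker, pos_of_nonneg_of_mulVec_eq_zero hoffdiag hirr hne (fun i => abs_nonneg _) hker⟩

/-- Zariski's lemma, semidefinite case: if `A` is a real symmetric irreducible matrix
with nonnegative off-diagonal entries whose quadratic form `Q` is negative semidefinite
but not negative definite, then the kernel of `A` is one-dimensional, spanned by a
vector with strictly positive coordinates. -/
theorem zariski_semidefinite_kernel
    {n : ℕ} (hn : 0 < n) (A : Matrix (Fin n) (Fin n) ℝ)
    (hsymm : A.IsSymm)
    (hoffdiag : ∀ i j : Fin n, i ≠ j → 0 ≤ A i j)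
    (hirr : ∀ S : Finset (Fin n), S.Nonempty → S ≠ Finset.univ →
      ∃ i ∈ S, ∃ j ∉ S, A i j ≠ 0)
    (hsemidef : ∀ x : Fin n → ℝ, (∑ i, ∑ j, A i j * x i * x j) ≤ 0)
    (hnotdef : ∃ x : Fin n → ℝ, x ≠ 0 ∧ (∑ i, ∑ j, A i j * x i * x j) = 0) :
    ∃ v : Fin n → ℝ, (∀ i, 0 < v i) ∧ A.mulVec v = 0 ∧
      ∀ w : Fin n → ℝ, A.mulVec w = 0 → ∃ c : ℝ, w = c • v := by
  obtain ⟨x, hx0, hx⟩ := hnotdef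
  obtain ⟨hker, hpos⟩ := abs_mem_kernel_pos hsymm hoffdiag hirr hsemidef hx0 hx
  refine ⟨fun i => |x i|, hpos, hker, fun w hw => ?_⟩
  set v : Fin n → ℝ := fun i => |x i| with hv
  let i₀ : Fin n := ⟨0, hn⟩
  have hv0 : v i₀ ≠ 0 := (hpos i₀).ne'
  refine ⟨w i₀ / v i₀, ?_⟩
  by_contra hne
  -- The difference is a nonzero kernel vector vanishing at `i₀`.
  have hu : A *ᵥ (w - (w i₀ / v i₀) • v) = 0 := by
    rw [mulVec_sub, mulVec_smul, hw, hker, smul_zero, sub_zero]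
  have h := (abs_mem_kernel_pos hsymm hoffdiag hirr hsemidef (sub_ne_zero.2 hne)
    (by rw [form_eq_dotProduct, hu, dotProduct_zero])).2 i₀
  have hz : (w - (w i₀ / v i₀) • v) i₀ = 0 := by
    simp [div_mul_cancel₀ _ hv0]
  rw [hz, abs_zero] at h
  exact lt_irrefl _ h
end

section
/- Let A be a real symmetric n×n matrix (n ≥ 1) whose off-diagonal entries are nonnegative (A i j ≥ 0 for all i ≠ j) and which is irreducible, and let Q(x) = xᵀAx be the associated quadratic form. If there exists a vector x ∈ ℝⁿ with Q(x) > 0, then there exists a vector X₀ ∈ ℝⁿ all of whose coordinates are strictly positive such that every coordinate of A·X₀ is strictly positive (i.e. X₀ · e_i > 0 for every standard basis vector e_i, where the pairing is given by A). -/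
open Matrix Finset

/-!
This is the Perron–Frobenius argument for the top eigenvalue. Let `M` be the maximum of the
quadratic form `Q` on the unit sphere, so `M > 0`. Since the off-diagonal entries of `A` are
nonnegative, replacing a maximizer by its coordinatewise absolute value `y` does not decrease `Q`,
so `y ≥ 0` is a maximizer too (`exists_nonneg_maximizer`). The form `M • 1 - A` is positive
semidefinite and vanishes at `y`, hence `y` lies in its kernel: `A y = M y`
(`mulVec_eq_smul_of_maximizer`). If `y i = 0` then `0 = (A y) i` is a sum of nonnegative terms, so
`A i j = 0` whenever `y j ≠ 0`; irreducibility applied to the zero set of `y` then forces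
`y > 0`, and `A y = M y > 0`.
-/

lemma dotProduct_mulVec_eq_sum {n : ℕ} (A : Matrix (Fin n) (Fin n) ℝ) (x : Fin n → ℝ) :
    x ⬝ᵥ A *ᵥ x = ∑ i, ∑ j, A i j * x i * x j := by
  simp only [dotProduct, mulVec, Finset.mul_sum]
  refine Finset.sum_congr rfl fun i _ => Finset.sum_congr rfl fun j _ => by ring

lemma dotProduct_mulVec_le_abs {n : ℕ} (A : Matrix (Fin n) (Fin n) ℝ)
    (hoffdiag : ∀ i j : Fin n, i ≠ j → 0 ≤ A i j) (x : Fin n → ℝ) :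
    x ⬝ᵥ A *ᵥ x ≤ |x| ⬝ᵥ A *ᵥ |x| := by
  rw [dotProduct_mulVec_eq_sum, dotProduct_mulVec_eq_sum]
  refine Finset.sum_le_sum fun i _ => Finset.sum_le_sum fun j _ => ?_
  simp only [Pi.abs_apply, mul_assoc]
  by_cases hij : i = j
  · subst hij
    rw [abs_mul_abs_self]
  · rw [← abs_mul]
    exact mul_le_mul_of_nonneg_left (le_abs_self _) (hoffdiag i j hij)

lemma abs_dotProduct_abs {n : ℕ} (x : Fin n → ℝ) : |x| ⬝ᵥ |x| = x ⬝ᵥ x := by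
  simp [dotProduct, Pi.abs_apply, abs_mul_abs_self]

/-- A nonnegative unit vector at which the quadratic form attains the maximum of its Rayleigh
quotient. -/
lemma exists_nonneg_maximizer {n : ℕ} (hn : 0 < n) (A : Matrix (Fin n) (Fin n) ℝ)
    (hoffdiag : ∀ i j : Fin n, i ≠ j → 0 ≤ A i j) :
    ∃ y : Fin n → ℝ, 0 ≤ y ∧ y ⬝ᵥ y = 1 ∧
      ∀ x : Fin n → ℝ, x ⬝ᵥ A *ᵥ x ≤ (y ⬝ᵥ A *ᵥ y) * (x ⬝ᵥ x) := by
  have hK : IsCompact {x : Fin n → ℝ | x ⬝ᵥ x = 1} := by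
    refine (isCompact_Icc (a := (-1 : Fin n → ℝ)) (b := 1)).of_isClosed_subset
      (isClosed_eq (by fun_prop) continuous_const) fun x hx => ?_
    have h : ∀ i, |x i| ≤ 1 := fun i => by
      rw [← sq_le_one_iff_abs_le_one, sq, ← show x ⬝ᵥ x = 1 from hx]
      exact Finset.single_le_sum (f := fun i => x i * x i)
        (fun j _ => mul_self_nonneg (x j)) (Finset.mem_univ i)
    exact ⟨fun i => (abs_le.1 (h i)).1, fun i => (abs_le.1 (h i)).2⟩
  obtain ⟨z, hz, hmax⟩ := hK.exists_isMaxOn (f := fun x => x ⬝ᵥ A *ᵥ x)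
    ⟨Pi.single ⟨0, hn⟩ 1, by simp⟩ (by fun_prop)
  refine ⟨|z|, abs_nonneg z, (abs_dotProduct_abs z).trans hz, fun x => ?_⟩
  have hx0 : 0 ≤ x ⬝ᵥ x := Finset.sum_nonneg fun i _ => mul_self_nonneg (x i)
  refine le_trans ?_ (mul_le_mul_of_nonneg_right (dotProduct_mulVec_le_abs A hoffdiag z) hx0)
  rcases hx0.eq_or_lt with h0 | h0
  · rw [dotProduct_self_eq_zero.1 h0.symm]
    simp
  · have hs : √(x ⬝ᵥ x) * √(x ⬝ᵥ x) = x ⬝ᵥ x := Real.mul_self_sqrt hx0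
    have hs0 : √(x ⬝ᵥ x) ≠ 0 := (Real.sqrt_pos.2 h0).ne'
    set s := √(x ⬝ᵥ x)
    have hm : s⁻¹ • x ∈ {x : Fin n → ℝ | x ⬝ᵥ x = 1} := by
      simp only [Set.mem_ofPred_eq, smul_dotProduct, dotProduct_smul, smul_eq_mul, ← hs]
      field_simp
    have := hmax hm
    simp only [Set.mem_ofPred_eq, mulVec_smul, smul_dotProduct, dotProduct_smul,
      smul_eq_mul] at this
    calc x ⬝ᵥ A *ᵥ x = (s⁻¹ * (s⁻¹ * (x ⬝ᵥ A *ᵥ x))) * (s * s) := by field_simp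
      _ ≤ (z ⬝ᵥ A *ᵥ z) * (s * s) := mul_le_mul_of_nonneg_right this (mul_self_nonneg s)
      _ = _ := by rw [hs]

/-- A maximizer of the Rayleigh quotient is an eigenvector, since it is a null vector of the
positive semidefinite form `M • 1 - A`. -/
lemma mulVec_eq_smul_of_maximizer {n : ℕ} (A : Matrix (Fin n) (Fin n) ℝ) (hsymm : A.IsSymm)
    (M : ℝ) (hM : ∀ x : Fin n → ℝ, x ⬝ᵥ A *ᵥ x ≤ M * (x ⬝ᵥ x))
    (y : Fin n → ℝ) (hy : y ⬝ᵥ A *ᵥ y = M * (y ⬝ᵥ y)) : A *ᵥ y = M • y := by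
  have hform : ∀ x : Fin n → ℝ,
      star x ⬝ᵥ (M • (1 : Matrix (Fin n) (Fin n) ℝ) - A) *ᵥ x
        = M * (x ⬝ᵥ x) - x ⬝ᵥ A *ᵥ x := fun x => by
    simp [sub_mulVec, smul_mulVec, dotProduct_sub]
  have hP : (M • (1 : Matrix (Fin n) (Fin n) ℝ) - A).PosSemidef := by
    refine .of_dotProduct_mulVec_nonneg ?_ fun x => ?_
    · simp [IsHermitian, conjTranspose_eq_transpose_of_trivial, hsymm.eq]
    · rw [hform]
      exact sub_nonneg.2 (hM x)
  have h := (hP.dotProduct_mulVec_zero_iff y).1 (by rw [hform, hy, sub_self])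
  rw [sub_mulVec, smul_mulVec, one_mulVec, sub_eq_zero] at h
  exact h.symm

/-- Zariski's lemma, indefinite case: if `A` is a real symmetric irreducible matrix
with nonnegative off-diagonal entries and the quadratic form takes a strictly positive
value, then there is a vector `X₀` with strictly positive coordinates such that every
coordinate of `A ⬝ X₀` is strictly positive. -/
theorem zariski_positive_case
    {n : ℕ} (hn : 0 < n) (A : Matrix (Fin n) (Fin n) ℝ)
    (hsymm : A.IsSymm)
    (hoffdiag : ∀ i j : Fin n, i ≠ j → 0 ≤ A i j)
    (hirr : ∀ S : Finset (Fin n), S.Nonempty → S ≠ Finset.univ →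
      ∃ i ∈ S, ∃ j ∉ S, A i j ≠ 0)
    (hpos : ∃ x : Fin n → ℝ, 0 < ∑ i, ∑ j, A i j * x i * x j) :
    ∃ X₀ : Fin n → ℝ, (∀ i, 0 < X₀ i) ∧ ∀ i, 0 < A.mulVec X₀ i := by
  obtain ⟨y, hy0, hy1, hmax⟩ := exists_nonneg_maximizer hn A hoffdiag
  have heig := mulVec_eq_smul_of_maximizer A hsymm _ hmax y (by rw [hy1, mul_one])
  have hM : 0 < y ⬝ᵥ A *ᵥ y := by
    obtain ⟨x, hx⟩ := hpos
    rw [← dotProduct_mulVec_eq_sum] at hx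
    exact pos_of_mul_pos_left (hx.trans_le (hmax x))
      (Finset.sum_nonneg fun i _ => mul_self_nonneg (x i))
  have hypos : ∀ i, 0 < y i := by
    by_contra! hcon
    obtain ⟨i₀, hi₀⟩ := hcon
    obtain ⟨i, hi, j, hj, hA⟩ := hirr (Finset.univ.filter fun i => y i = 0)
      ⟨i₀, by simpa using le_antisymm hi₀ (hy0 i₀)⟩ (fun h => by
        have : y = 0 := funext fun i => by simpa using Finset.ext_iff.1 h i
        simp [this] at hy1)
    have hi : y i = 0 := by simpa using hi
    have hj : y j ≠ 0 := by simpa using hj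
    have hsum : ∑ k, A i k * y k = 0 := by
      have := congrFun heig i
      simpa [mulVec, dotProduct, hi] using this
    -- The diagonal entry may be negative, but it is multiplied by `y i = 0`.
    have hterm : ∀ k ∈ Finset.univ, 0 ≤ A i k * y k := fun k _ => by
      by_cases hik : i = k
      · rw [← hik, hi, mul_zero]
      · exact mul_nonneg (hoffdiag i k hik) (hy0 k)
    exact mul_ne_zero hA hj ((Finset.sum_eq_zero_iff_of_nonneg hterm).1 hsum j (Finset.mem_univ j))
  refine ⟨y, hypos, fun i => ?_⟩
  rw [heig]
  exact mul_pos hM (hypos i)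
end

section
/- (Generalized Zariski's lemma.) Let A be a real symmetric n×n matrix (n ≥ 1) whose off-diagonal entries are nonnegative (A i j ≥ 0 for all i ≠ j) and which is irreducible, and let Q(x) = xᵀAx. Then exactly one of the following three possibilities occurs: (i) Q is negative definite (Q(x) < 0 for all x ≠ 0); (ii) Q is negative semidefinite of rank n−1, and the kernel of A is one-dimensional, spanned by a vector all of whose coordinates are strictly positive; (iii) there exists x ∈ ℝⁿ with Q(x) > 0, and in this case there exists X₀ ∈ ℝⁿ with all coordinates strictly positive such that every coordinate of A·X₀ is strictly positive. -/
/-!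
The proof is a variational Perron–Frobenius argument. Let `μ` be the maximum of `Q` on the unit
sphere, attained at `x`. Since the off-diagonal entries are nonnegative, `Q(|x|) ≥ Q(x)`, so
`u = |x|` is also a maximizer; as `μ • 1 - A` is positive semidefinite and its form vanishes at
`u`, it follows that `A u = μ u` (`exists_perron`). Irreducibility forces a nonzero nonnegative eigenvector
to be strictly positive (`pos_of_nonneg_eigenvector`). The three cases are the signs of `μ`:
* if `μ < 0`, then `Q(y) ≤ μ |y|² < 0` for `y ≠ 0`;
* if `μ = 0`, then `Q ≤ 0` and `u` spans the kernel: for `A w = 0`, subtracting from `w` the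
  multiple `c u` with `c = min wᵢ / uᵢ` leaves a nonnegative kernel vector with a zero coordinate,
  which must vanish (`kernel_eq_smul`);
* if `μ > 0`, then `X₀ = u` works.
-/

open Matrix Finset

lemma sum_eq_dotProduct_mulVec {n : ℕ} (A : Matrix (Fin n) (Fin n) ℝ) (x : Fin n → ℝ) :
    ∑ i, ∑ j, A i j * x i * x j = x ⬝ᵥ A *ᵥ x := by
  simp only [dotProduct, mulVec, Finset.mul_sum]
  exact Finset.sum_congr rfl fun i _ => Finset.sum_congr rfl fun j _ => by ring

/-- At a coordinate where `z` vanishes, the eigenvector equation says that a sum of nonnegative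
terms is zero, so the zero set of `z` is not linked to its complement by `A`. -/
lemma pos_of_nonneg_eigenvector {n : ℕ} {A : Matrix (Fin n) (Fin n) ℝ}
    (hoffdiag : ∀ i j : Fin n, i ≠ j → 0 ≤ A i j)
    (hirr : ∀ S : Finset (Fin n), S.Nonempty → S ≠ Finset.univ →
      ∃ i ∈ S, ∃ j ∉ S, A i j ≠ 0)
    {μ : ℝ} {z : Fin n → ℝ} (hz : ∀ i, 0 ≤ z i) (hne : z ≠ 0) (hA : A *ᵥ z = μ • z) :
    ∀ i, 0 < z i := by
  by_contra! hcon
  obtain ⟨i₀, hi₀⟩ := hcon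
  obtain ⟨i, hi, j, hj, hij⟩ := hirr (Finset.univ.filter fun i => z i = 0)
    ⟨i₀, by simpa using le_antisymm hi₀ (hz i₀)⟩
    (fun h => hne (funext fun i => by
      have : i ∈ Finset.univ.filter fun i => z i = 0 := by
        rw [h]; exact Finset.mem_univ i
      simpa using this))
  simp only [Finset.mem_filter, Finset.mem_univ, true_and] at hi hj
  have hsum : ∑ k, A i k * z k = 0 := by
    have := congrFun hA i
    simpa [mulVec, dotProduct, hi] using this
  have hnn : ∀ k ∈ Finset.univ, 0 ≤ A i k * z k := fun k _ => by
    by_cases hk : i = k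
    · subst hk; simp [hi]
    · exact mul_nonneg (hoffdiag i k hk) (hz k)
  have := (Finset.sum_eq_zero_iff_of_nonneg hnn).1 hsum j (Finset.mem_univ j)
  exact (mul_ne_zero hij hj) this

lemma quadForm_le_abs {n : ℕ} {A : Matrix (Fin n) (Fin n) ℝ}
    (hoffdiag : ∀ i j : Fin n, i ≠ j → 0 ≤ A i j) (x : Fin n → ℝ) :
    x ⬝ᵥ A *ᵥ x ≤ (fun i => |x i|) ⬝ᵥ A *ᵥ (fun i => |x i|) := by
  rw [← sum_eq_dotProduct_mulVec, ← sum_eq_dotProduct_mulVec]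
  refine Finset.sum_le_sum fun i _ => Finset.sum_le_sum fun j _ => ?_
  by_cases h : i = j
  · subst h
    rw [mul_assoc, mul_assoc, abs_mul_abs_self]
  · rw [mul_assoc, mul_assoc, ← abs_mul]
    exact mul_le_mul_of_nonneg_left (le_abs_self _) (hoffdiag i j h)

/-- The maximum of the quadratic form on the unit sphere, written homogeneously. -/
lemma exists_max_quadForm {n : ℕ} (hn : 0 < n) (A : Matrix (Fin n) (Fin n) ℝ) :
    ∃ (μ : ℝ) (x : Fin n → ℝ), x ≠ 0 ∧ x ⬝ᵥ A *ᵥ x = μ * (x ⬝ᵥ x) ∧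
      ∀ y : Fin n → ℝ, y ⬝ᵥ A *ᵥ y ≤ μ * (y ⬝ᵥ y) := by
  have hcont : Continuous fun x : Fin n → ℝ => x ⬝ᵥ A *ᵥ x := by fun_prop
  have hcomp : IsCompact {x : Fin n → ℝ | x ⬝ᵥ x = 1} := by
    refine (isCompact_Icc (a := fun _ : Fin n => (-1 : ℝ)) (b := fun _ => 1)).of_isClosed_subset
      (isClosed_eq (by fun_prop) continuous_const) fun x hx => ?_
    have h : ∀ i, |x i| ≤ 1 := fun i => by
      rw [← sq_le_one_iff_abs_le_one, ← (show x ⬝ᵥ x = 1 from hx), sq]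
      exact Finset.single_le_sum (f := fun i => x i * x i) (fun j _ => mul_self_nonneg _)
        (Finset.mem_univ i)
    exact ⟨fun i => (abs_le.1 (h i)).1, fun i => (abs_le.1 (h i)).2⟩
  obtain ⟨x, hx, hmax⟩ := hcomp.exists_isMaxOn
    ⟨Pi.single ⟨0, hn⟩ 1, by simp⟩ hcont.continuousOn
  have hx1 : x ⬝ᵥ x = 1 := hx
  refine ⟨x ⬝ᵥ A *ᵥ x, x, ?_, by rw [hx1, mul_one], fun y => ?_⟩
  · rintro rfl
    simp at hx1
  · by_cases hy : y = 0
    · simp [hy]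
    have hpos : 0 < y ⬝ᵥ y :=
      lt_of_le_of_ne (Finset.sum_nonneg fun i _ => mul_self_nonneg (y i))
        (fun h => hy (dotProduct_self_eq_zero.1 h.symm))
    have hs : 0 < √(y ⬝ᵥ y) := Real.sqrt_pos.2 hpos
    have hss : √(y ⬝ᵥ y) * √(y ⬝ᵥ y) = y ⬝ᵥ y := Real.mul_self_sqrt hpos.le
    have hmem : (√(y ⬝ᵥ y))⁻¹ • y ∈ {x : Fin n → ℝ | x ⬝ᵥ x = 1} := by
      simp only [Set.mem_ofPred_eq, smul_dotProduct, dotProduct_smul, smul_eq_mul]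
      rw [← mul_assoc, ← mul_inv, hss, inv_mul_cancel₀ hpos.ne']
    have := hmax hmem
    simp only [Set.mem_ofPred_eq, smul_dotProduct, dotProduct_smul, mulVec_smul,
      smul_eq_mul] at this
    rw [← mul_assoc, ← mul_inv, hss, inv_mul_le_iff₀ hpos] at this
    linarith

/-- The Perron eigenvector: its eigenvalue is the maximum of the Rayleigh quotient. -/
lemma exists_perron {n : ℕ} (hn : 0 < n) {A : Matrix (Fin n) (Fin n) ℝ}
    (hsymm : A.IsSymm) (hoffdiag : ∀ i j : Fin n, i ≠ j → 0 ≤ A i j)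
    (hirr : ∀ S : Finset (Fin n), S.Nonempty → S ≠ Finset.univ →
      ∃ i ∈ S, ∃ j ∉ S, A i j ≠ 0) :
    ∃ (μ : ℝ) (u : Fin n → ℝ), (∀ i, 0 < u i) ∧ A *ᵥ u = μ • u ∧
      ∀ y : Fin n → ℝ, y ⬝ᵥ A *ᵥ y ≤ μ * (y ⬝ᵥ y) := by
  obtain ⟨μ, x, hx0, hx, hmax⟩ := exists_max_quadForm hn A
  have hform : ∀ y : Fin n → ℝ, y ⬝ᵥ (μ • (1 : Matrix (Fin n) (Fin n) ℝ) - A) *ᵥ y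
      = μ * (y ⬝ᵥ y) - y ⬝ᵥ A *ᵥ y := fun y => by
    simp [sub_mulVec, smul_mulVec, dotProduct_sub]
  have hpsd : (μ • (1 : Matrix (Fin n) (Fin n) ℝ) - A).PosSemidef := by
    refine PosSemidef.of_dotProduct_mulVec_nonneg ?_ fun y => ?_
    · simp [IsHermitian, conjTranspose_eq_transpose_of_trivial, hsymm.eq]
    · rw [star_trivial, hform]
      linarith [hmax y]
  set u : Fin n → ℝ := fun i => |x i| with hu
  have huu : u ⬝ᵥ u = x ⬝ᵥ x := by simp [dotProduct, hu]
  have hAu : A *ᵥ u = μ • u := by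
    have h0 : (μ • (1 : Matrix (Fin n) (Fin n) ℝ) - A) *ᵥ u = 0 := by
      rw [← hpsd.dotProduct_mulVec_zero_iff, star_trivial, hform]
      have h1 := hmax u
      have h2 := quadForm_le_abs hoffdiag x
      rw [huu] at h1 ⊢
      change _ ≤ u ⬝ᵥ A *ᵥ u at h2
      linarith
    rw [sub_mulVec, smul_mulVec, one_mulVec, sub_eq_zero] at h0
    exact h0.symm
  have hu0 : u ≠ 0 := fun h => hx0 (funext fun i => abs_eq_zero.1 (congrFun h i))
  exact ⟨μ, u, pos_of_nonneg_eigenvector hoffdiag hirr (fun i => abs_nonneg _) hu0 hAu, hAu, hmax⟩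

lemma kernel_eq_smul {n : ℕ} (hn : 0 < n) {A : Matrix (Fin n) (Fin n) ℝ}
    (hoffdiag : ∀ i j : Fin n, i ≠ j → 0 ≤ A i j)
    (hirr : ∀ S : Finset (Fin n), S.Nonempty → S ≠ Finset.univ →
      ∃ i ∈ S, ∃ j ∉ S, A i j ≠ 0)
    {u : Fin n → ℝ} (hu : ∀ i, 0 < u i) (hAu : A *ᵥ u = 0)
    (w : Fin n → ℝ) (hw : A *ᵥ w = 0) : ∃ c : ℝ, w = c • u := by
  have : Nonempty (Fin n) := ⟨⟨0, hn⟩⟩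
  obtain ⟨k, hk⟩ := Finite.exists_min fun i => w i / u i
  refine ⟨w k / u k, ?_⟩
  by_contra hne
  have hpos := pos_of_nonneg_eigenvector (μ := 0) (z := w - (w k / u k) • u) hoffdiag hirr
    (fun i => by
      have := (le_div_iff₀ (hu i)).1 (hk i)
      simpa using this)
    (fun h => hne (sub_eq_zero.1 h)) (by simp [mulVec_sub, mulVec_smul, hw, hAu]) k
  have : w k / u k * u k = w k := div_mul_cancel₀ _ (hu k).ne'
  simp [this] at hpos

lemma rank_eq_of_kernel {n : ℕ} {A : Matrix (Fin n) (Fin n) ℝ} {u : Fin n → ℝ} (hu : u ≠ 0)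
    (hAu : A *ᵥ u = 0) (hker : ∀ w : Fin n → ℝ, A *ᵥ w = 0 → ∃ c : ℝ, w = c • u) :
    A.rank = n - 1 := by
  have hk : LinearMap.ker A.mulVecLin = Submodule.span ℝ {u} := by
    ext w
    rw [LinearMap.mem_ker, mulVecLin_apply, Submodule.mem_span_singleton]
    constructor
    · intro h
      obtain ⟨c, hc⟩ := hker w h
      exact ⟨c, hc.symm⟩
    · rintro ⟨c, rfl⟩
      rw [mulVec_smul, hAu, smul_zero]
  have h := LinearMap.finrank_range_add_finrank_ker A.mulVecLin
  rw [hk, finrank_span_singleton hu, Module.finrank_fin_fun] at h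
  rw [Matrix.rank]
  omega

/-- Generalized Zariski's lemma: for a real symmetric irreducible matrix `A` with
nonnegative off-diagonal entries, exactly one of the following occurs for the
quadratic form `Q(x) = xᵀAx`:
(i) `Q` is negative definite;
(ii) `Q` is negative semidefinite of rank `n - 1`, with one-dimensional kernel
spanned by a vector with strictly positive coordinates;
(iii) `Q` takes a strictly positive value, and then there is a vector `X₀` with
strictly positive coordinates such that every coordinate of `A ⬝ X₀` is strictly
positive. -/
theorem zariski_lemma_trichotomy
    {n : ℕ} (hn : 0 < n) (A : Matrix (Fin n) (Fin n) ℝ)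
    (hsymm : A.IsSymm)
    (hoffdiag : ∀ i j : Fin n, i ≠ j → 0 ≤ A i j)
    (hirr : ∀ S : Finset (Fin n), S.Nonempty → S ≠ Finset.univ →
      ∃ i ∈ S, ∃ j ∉ S, A i j ≠ 0) :
    let P₁ : Prop := ∀ x : Fin n → ℝ, x ≠ 0 → (∑ i, ∑ j, A i j * x i * x j) < 0
    let P₂ : Prop := (∀ x : Fin n → ℝ, (∑ i, ∑ j, A i j * x i * x j) ≤ 0) ∧
      A.rank = n - 1 ∧
      ∃ v : Fin n → ℝ, (∀ i, 0 < v i) ∧ A.mulVec v = 0 ∧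
        ∀ w : Fin n → ℝ, A.mulVec w = 0 → ∃ c : ℝ, w = c • v
    let P₃ : Prop := (∃ x : Fin n → ℝ, 0 < ∑ i, ∑ j, A i j * x i * x j) ∧
      ∃ X₀ : Fin n → ℝ, (∀ i, 0 < X₀ i) ∧ ∀ i, 0 < A.mulVec X₀ i
    (P₁ ∧ ¬P₂ ∧ ¬P₃) ∨ (¬P₁ ∧ P₂ ∧ ¬P₃) ∨ (¬P₁ ∧ ¬P₂ ∧ P₃) := by
  intro P₁ P₂ P₃
  obtain ⟨μ, u, hu, hAu, hmax⟩ := exists_perron hn hsymm hoffdiag hirr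
  have hu0 : u ≠ 0 := fun h => (hu ⟨0, hn⟩).ne' (congrFun h _)
  have h12 : P₁ → ¬P₂ := by
    rintro h1 ⟨-, -, v, hv, hAv, -⟩
    have := h1 v fun h => (hv ⟨0, hn⟩).ne' (congrFun h _)
    rw [sum_eq_dotProduct_mulVec, hAv, dotProduct_zero] at this
    exact this.false
  have h13 : P₁ → ¬P₃ := by
    rintro h1 ⟨⟨x, hx⟩, -⟩
    refine lt_asymm hx (h1 x ?_)
    rintro rfl
    simp at hx
  have h23 : P₂ → ¬P₃ := fun h2 ⟨⟨x, hx⟩, _⟩ => (h2.1 x).not_gt hx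
  have hsq : ∀ y : Fin n → ℝ, y ≠ 0 → 0 < y ⬝ᵥ y := fun y hy =>
    lt_of_le_of_ne (Finset.sum_nonneg fun i _ => mul_self_nonneg (y i))
      (fun h => hy (dotProduct_self_eq_zero.1 h.symm))
  rcases lt_trichotomy μ 0 with hμ | hμ | hμ
  · have h1 : P₁ := fun x hx => by
      rw [sum_eq_dotProduct_mulVec]
      exact (hmax x).trans_lt (mul_neg_of_neg_of_pos hμ (hsq x hx))
    exact Or.inl ⟨h1, h12 h1, h13 h1⟩
  · subst hμ
    rw [zero_smul] at hAu
    have hker := kernel_eq_smul hn hoffdiag hirr hu hAu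
    have h2 : P₂ := by
      refine ⟨fun x => ?_, rank_eq_of_kernel hu0 hAu hker, u, hu, hAu, hker⟩
      rw [sum_eq_dotProduct_mulVec]
      simpa using hmax x
    exact Or.inr (Or.inl ⟨fun h1 => h12 h1 h2, h2, h23 h2⟩)
  · have h3 : P₃ := by
      refine ⟨⟨u, ?_⟩, u, hu, fun i => ?_⟩
      · rw [sum_eq_dotProduct_mulVec, hAu, dotProduct_smul]
        exact mul_pos hμ (hsq u hu0)
      · rw [hAu]
        exact mul_pos hμ (hu i)
    exact Or.inr (Or.inr ⟨fun h1 => h13 h1 h3, fun h2 => h23 h2 h3, h3⟩)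
end

section
/- Let A be a real symmetric n×n matrix (n ≥ 1) whose off-diagonal entries are nonnegative (A i j ≥ 0 for all i ≠ j) and which is irreducible, and suppose the quadratic form Q(x) = xᵀAx is negative semidefinite (Q(x) ≤ 0 for all x). If v ∈ ℝⁿ is a nonzero vector with nonnegative coordinates (v i ≥ 0 for all i) satisfying Q(v) = 0, then A·v = 0 and every coordinate of v is strictly positive. -/
/-!
The matrix `-A` is positive semidefinite, so a vector on which its quadratic form vanishes lies in
its kernel (`Matrix.PosSemidef.dotProduct_mulVec_zero_iff`); hence `A v = 0`. If `v` vanished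
somewhere, irreducibility applied to the zero set of `v` would give `i`, `j` with `v i = 0`,
`v j > 0` and `A i j ≠ 0`. Every term of `(A v) i = ∑ k, A i k * v k = 0` is nonnegative, because
the diagonal term is killed by `v i = 0`, so `A i j * v j = 0`, a contradiction.
-/

open Matrix Finset

/-- For a real symmetric irreducible matrix `A` with nonnegative off-diagonal entries
whose quadratic form is negative semidefinite: a nonzero vector `v` with nonnegative
coordinates satisfying `Q(v) = 0` lies in the kernel of `A` and has all coordinates
strictly positive. -/
theorem zariski_null_vector_positive
    {n : ℕ} (hn : 0 < n) (A : Matrix (Fin n) (Fin n) ℝ)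
    (hsymm : A.IsSymm)
    (hoffdiag : ∀ i j : Fin n, i ≠ j → 0 ≤ A i j)
    (hirr : ∀ S : Finset (Fin n), S.Nonempty → S ≠ Finset.univ →
      ∃ i ∈ S, ∃ j ∉ S, A i j ≠ 0)
    (hsemidef : ∀ x : Fin n → ℝ, (∑ i, ∑ j, A i j * x i * x j) ≤ 0)
    (v : Fin n → ℝ) (hv0 : v ≠ 0) (hvnonneg : ∀ i, 0 ≤ v i)
    (hQv : (∑ i, ∑ j, A i j * v i * v j) = 0) :
    A.mulVec v = 0 ∧ ∀ i, 0 < v i := by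
  have hform : ∀ x : Fin n → ℝ,
      star x ⬝ᵥ (-A) *ᵥ x = -∑ i, ∑ j, A i j * x i * x j := by
    intro x
    rw [neg_mulVec, dotProduct_neg]
    simp only [dotProduct, mulVec, Pi.star_apply, star_trivial, Finset.mul_sum]
    congr 1
    exact Finset.sum_congr rfl fun i _ => Finset.sum_congr rfl fun j _ => by ring
  have hpsd : (-A).PosSemidef := by
    refine Matrix.PosSemidef.of_dotProduct_mulVec_nonneg ?_ fun x => ?_
    · rw [Matrix.IsHermitian, conjTranspose_eq_transpose_of_trivial, transpose_neg, hsymm.eq]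
    · rw [hform x]
      linarith [hsemidef x]
  have hker : A *ᵥ v = 0 := by
    have h := (hpsd.dotProduct_mulVec_zero_iff v).1 (by rw [hform v, hQv, neg_zero])
    rwa [neg_mulVec, neg_eq_zero] at h
  refine ⟨hker, ?_⟩
  by_contra! hzero
  obtain ⟨m, hm⟩ := hzero
  obtain ⟨i, hi, j, hj, hij⟩ := hirr (Finset.univ.filter fun k => v k = 0)
    ⟨m, by simpa using le_antisymm hm (hvnonneg m)⟩
    (fun h => hv0 (funext fun k => by simpa using h.ge (Finset.mem_univ k)))
  simp only [Finset.mem_filter, Finset.mem_univ, true_and] at hi hj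
  have hterm : ∀ k ∈ Finset.univ, 0 ≤ A i k * v k := by
    intro k _
    by_cases hik : i = k
    · rw [← hik, hi, mul_zero]
    · exact mul_nonneg (hoffdiag i k hik) (hvnonneg k)
  have hsum : ∑ k, A i k * v k = 0 := congrFun hker i
  exact mul_ne_zero hij hj ((Finset.sum_eq_zero_iff_of_nonneg hterm).1 hsum j (Finset.mem_univ j))
end

section
/- Let A be a real symmetric n×n matrix (n ≥ 1) whose off-diagonal entries are nonnegative (A i j ≥ 0 for all i ≠ j) and which is irreducible, and suppose the quadratic form Q(x) = xᵀAx is negative semidefinite (Q(x) ≤ 0 for all x). If v and w are two nonzero vectors in ℝⁿ with nonnegative coordinates satisfying Q(v) = 0 and Q(w) = 0, then there exists a real number c > 0 such that w = c • v. (This is the statement underlying the fact that an effective divisor supported on a fiber with vanishing self-intersection determines the fiber divisor up to a positive multiple.) -/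
/-!
Since `-A` is positive semidefinite, a vector on which the quadratic form vanishes lies in the
kernel of `A`. A nonnegative kernel vector with a zero coordinate is zero: its zero set, if
proper, would be joined to its complement by a nonzero (hence positive) entry of `A`, making a
coordinate of `A *ᵥ x` positive (`eq_zero_of_mulVec_eq_zero`). Hence `v` and `w` have positive
coordinates. With `c = min w i / v i > 0`, the kernel vector `w - c • v` is nonnegative and has
a zero coordinate, so it vanishes.
-/

open Matrix Finset

lemma mulVec_eq_zero_of_quadForm_eq_zero {n : ℕ} (A : Matrix (Fin n) (Fin n) ℝ)
    (hsymm : A.IsSymm)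
    (hsemidef : ∀ x : Fin n → ℝ, (∑ i, ∑ j, A i j * x i * x j) ≤ 0)
    (x : Fin n → ℝ) (hQ : (∑ i, ∑ j, A i j * x i * x j) = 0) : A *ᵥ x = 0 := by
  have key : ∀ y : Fin n → ℝ, star y ⬝ᵥ ((-A) *ᵥ y) = -∑ i, ∑ j, A i j * y i * y j := by
    intro y
    rw [neg_mulVec, dotProduct_neg, neg_inj]
    simp only [dotProduct, mulVec, Finset.mul_sum, star_trivial]
    refine Finset.sum_congr rfl fun i _ => Finset.sum_congr rfl fun j _ => ?_
    ring
  have hpos : (-A).PosSemidef := by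
    refine PosSemidef.of_dotProduct_mulVec_nonneg ?_ fun y => ?_
    · rw [IsHermitian, conjTranspose_eq_transpose_of_trivial, transpose_neg, hsymm.eq]
    · rw [key]
      linarith [hsemidef y]
  have h := (hpos.dotProduct_mulVec_zero_iff x).1 (by rw [key, hQ, neg_zero])
  simpa [neg_mulVec] using h

lemma eq_zero_of_mulVec_eq_zero {n : ℕ} (A : Matrix (Fin n) (Fin n) ℝ)
    (hoffdiag : ∀ i j : Fin n, i ≠ j → 0 ≤ A i j)
    (hirr : ∀ S : Finset (Fin n), S.Nonempty → S ≠ Finset.univ →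
      ∃ i ∈ S, ∃ j ∉ S, A i j ≠ 0)
    (x : Fin n → ℝ) (hx : ∀ i, 0 ≤ x i) (hAx : A *ᵥ x = 0) (k : Fin n) (hk : x k = 0) :
    x = 0 := by
  by_contra hne
  obtain ⟨i, hi, j, hj, hij⟩ := hirr (univ.filter fun i => x i = 0) ⟨k, by simpa using hk⟩
    (fun h => hne (funext fun i => by
      have := h ▸ mem_univ i
      simpa using this))
  simp only [mem_filter, mem_univ, true_and] at hi hj
  have hsum : ∑ l, A i l * x l = 0 := congrFun hAx i
  -- The possibly negative diagonal entry `A i i` does not contribute because `x i = 0`.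
  have hterm : ∀ l ∈ univ, 0 ≤ A i l * x l := by
    intro l _
    by_cases hl : i = l
    · rw [← hl, hi, mul_zero]
    · exact mul_nonneg (hoffdiag i l hl) (hx l)
  exact mul_ne_zero hij hj ((Finset.sum_eq_zero_iff_of_nonneg hterm).1 hsum j (mem_univ j))

/-- For a real symmetric irreducible matrix `A` with nonnegative off-diagonal entries
whose quadratic form is negative semidefinite: two nonzero vectors with nonnegative
coordinates on which the quadratic form vanishes are positive multiples of each other. -/
theorem zariski_null_vectors_proportional
    {n : ℕ} (hn : 0 < n) (A : Matrix (Fin n) (Fin n) ℝ)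
    (hsymm : A.IsSymm)
    (hoffdiag : ∀ i j : Fin n, i ≠ j → 0 ≤ A i j)
    (hirr : ∀ S : Finset (Fin n), S.Nonempty → S ≠ Finset.univ →
      ∃ i ∈ S, ∃ j ∉ S, A i j ≠ 0)
    (hsemidef : ∀ x : Fin n → ℝ, (∑ i, ∑ j, A i j * x i * x j) ≤ 0)
    (v w : Fin n → ℝ) (hv0 : v ≠ 0) (hw0 : w ≠ 0)
    (hvnonneg : ∀ i, 0 ≤ v i) (hwnonneg : ∀ i, 0 ≤ w i)
    (hQv : (∑ i, ∑ j, A i j * v i * v j) = 0)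
    (hQw : (∑ i, ∑ j, A i j * w i * w j) = 0) :
    ∃ c : ℝ, 0 < c ∧ w = c • v := by
  have hAv := mulVec_eq_zero_of_quadForm_eq_zero A hsymm hsemidef v hQv
  have hAw := mulVec_eq_zero_of_quadForm_eq_zero A hsymm hsemidef w hQw
  have hv : ∀ i, 0 < v i := fun i => (hvnonneg i).lt_of_ne' fun h =>
    hv0 (eq_zero_of_mulVec_eq_zero A hoffdiag hirr v hvnonneg hAv i h)
  have hw : ∀ i, 0 < w i := fun i => (hwnonneg i).lt_of_ne' fun h =>
    hw0 (eq_zero_of_mulVec_eq_zero A hoffdiag hirr w hwnonneg hAw i h)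
  obtain ⟨k, -, hk⟩ := Finset.exists_min_image univ (fun i => w i / v i) ⟨⟨0, hn⟩, mem_univ _⟩
  refine ⟨w k / v k, div_pos (hw k) (hv k), sub_eq_zero.1 ?_⟩
  refine eq_zero_of_mulVec_eq_zero A hoffdiag hirr _ (fun i => ?_) ?_ k ?_
  · have := (le_div_iff₀ (hv i)).1 (hk i (mem_univ i))
    simpa using this
  · rw [mulVec_sub, mulVec_smul, hAv, hAw, smul_zero, sub_zero]
  · simp [div_mul_cancel₀ _ (hv k).ne']
end
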